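/- arXiv:2011.07566 — 4 statements merged into one kernel-verified Lean document; each statement's English description precedes it below -/
import Mathlib

section
/- Let G be an extraspecial 2-group of order 2^{2n+1} with unique central involution z, and let S = (S∩{z}) ∪ K(x₁) ∪ … ∪ K(x_ℓ) be a normal connecting set generating G, where K(x₁),…,K(x_ℓ) are distinct conjugacy classes of size 2. Then the adjacency matrix A of Cay(G,S) has only integer eigenvalues, and its set of eigenvalues is exactly {4e_y − 2ℓ + 1 : y ∈ (ℤ/2ℤ)^{2n}} ∪ {−1} if z ∈ S, and exactly {4e_y − 2ℓ : y ∈ (ℤ/2ℤ)^{2n}} ∪ {0} if z ∉ S. -/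
/-!
Write `A` for the operator of `Cay(G,S)`, `(A f)(g) = ∑_{s ∈ S} f(s⁻¹ g)`, and `ε = [z ∈ S]`. The
center is `{1, z}` and commutators are central, so each class of size two is `{xᵢ, xᵢ z}` and a sum
over `S` splits as `ε F(z) + ∑ᵢ (F(xᵢ) + F(xᵢ z))` (`sum_connecting`). On functions that are odd
under translation by `z` the pairs cancel, and `A` acts as the scalar `-ε` (`mulVec_odd`).

The functions even under translation by `z` are spanned by the `2^{2n}` characters
`χ_y(g) = (-1)^{y · φ(g)}` of `G/Z`, each of which is an eigenvector with eigenvalue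
`∑_{s ∈ S} χ_y(s) = 4 e_y - 2 ℓ + ε` (`sum_chr`, `mulVec_chr`). Instead of decomposing the whole
space, the proof takes an eigenvector `f` for `θ`: either `f` has a nonzero odd part, which is again
an eigenvector and forces `θ = -ε`, or `f` is even, and then some Fourier coefficient
`∑_g χ_y(g) f(g)` is nonzero (`eq_zero_of_coeff`), which forces `θ` to be the eigenvalue of `χ_y`.
-/

noncomputable section

/-- A normal connecting set: a subset of `G \ {1}` closed under inversion and conjugation. -/
def IsNormalConnecting {G : Type*} [Group G] (S : Finset G) : Prop :=
  (1 : G) ∉ S ∧ (∀ s ∈ S, s⁻¹ ∈ S) ∧ ∀ s ∈ S, ∀ g : G, g * s * g⁻¹ ∈ S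

/-- Adjacency matrix of the Cayley graph `Cay(G,S)`: the `(g,h)` entry is `1` iff `g * h⁻¹ ∈ S`. -/
def cayAdj {G : Type*} [Group G] [Fintype G] [DecidableEq G] (S : Finset G) : Matrix G G ℂ :=
  Matrix.of fun g h => if g * h⁻¹ ∈ S then 1 else 0

/-- `G` is an extraspecial `p`-group of order `p^(2n+1)`: the center has order `p`, and the
quotient by the center is elementary abelian (equivalently, `p`-th powers and commutators are
central). -/
def IsExtraspecial (p n : ℕ) (G : Type*) [Group G] : Prop :=
  Nat.card G = p ^ (2 * n + 1) ∧ Nat.card (Subgroup.center G) = p ∧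
    (∀ g : G, g ^ p ∈ Subgroup.center G) ∧
    ∀ g h : G, g * h * g⁻¹ * h⁻¹ ∈ Subgroup.center G

/-- `e_y`: the number of indices `i` with `y · x̄ᵢ = 0` (standard dot product mod `2`), where
`x̄ᵢ = φ (x i)` is the image of `xᵢ` under the fixed identification `φ` of `G/Z` with
`(ℤ/2ℤ)^m`. -/
def eY {G : Type*} {m ℓ : ℕ} (φ : G → (Fin m → ZMod 2)) (x : Fin ℓ → G)
    (y : Fin m → ZMod 2) : ℕ :=
  (Finset.univ.filter fun i : Fin ℓ => (∑ j, y j * φ (x i) j) = 0).card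

/-! ### Characters of `G/Z` -/

/-- The nontrivial additive character `a ↦ (-1)^a` of `ℤ/2ℤ`. -/
def sgn (a : ZMod 2) : ℂ := if a = 0 then 1 else -1

lemma zmod_two_eq_one {a : ZMod 2} (h : a ≠ 0) : a = 1 := by
  revert h; revert a; decide

lemma sgn_add (a b : ZMod 2) : sgn (a + b) = sgn a * sgn b := by
  have h11 : (1 + 1 : ZMod 2) = 0 := by decide
  by_cases ha : a = 0
  · simp [sgn, ha]
  by_cases hb : b = 0
  · simp [sgn, hb]
  · rw [zmod_two_eq_one ha, zmod_two_eq_one hb, h11]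
    simp [sgn]

/-- The character `χ_y(g) = (-1)^{y · φ(g)}` of `G` that is inflated from `G/Z`. -/
def chr {G : Type*} {m : ℕ} (φ : G → (Fin m → ZMod 2)) (y : Fin m → ZMod 2) (g : G) : ℂ :=
  sgn (∑ j, y j * φ g j)

lemma chr_of_map_zero {G : Type*} {m : ℕ} {φ : G → (Fin m → ZMod 2)} (y : Fin m → ZMod 2) {g : G}
    (h : φ g = 0) : chr φ y g = 1 := by
  simp [chr, h, sgn]

/-- Column orthogonality of the characters of `G/Z`. -/
lemma sum_chr_eq_zero {G : Type*} {m : ℕ} {φ : G → (Fin m → ZMod 2)} {g : G}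
    (h : φ g ≠ 0) : ∑ y, chr φ y g = 0 := by
  obtain ⟨j, hj⟩ := Function.ne_iff.mp h
  have hj1 : φ g j = 1 := zmod_two_eq_one hj
  -- Translating `y` by the basis vector `e_j` negates every term.
  have key : ∑ y, chr φ y g = ∑ y, -chr φ y g := by
    rw [← Equiv.sum_comp (Equiv.addRight (Pi.single j (1 : ZMod 2)))]
    refine Finset.sum_congr rfl fun y _ => ?_
    have h1 : ∑ k, (y + Pi.single j (1 : ZMod 2) : Fin m → ZMod 2) k * φ g k =
        ∑ k, y k * φ g k + 1 := by
      simp [add_mul, Finset.sum_add_distrib, Pi.single_apply, hj1]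
    simp only [chr, Equiv.coe_addRight, h1, sgn_add]
    simp [sgn]
  rw [Finset.sum_neg_distrib] at key
  exact self_eq_neg.mp key

section Characters

variable {G : Type*} [Group G] {m : ℕ} {φ : G → (Fin m → ZMod 2)}

lemma chr_mul (hadd : ∀ a b : G, φ (a * b) = φ a + φ b) (y : Fin m → ZMod 2) (a b : G) :
    chr φ y (a * b) = chr φ y a * chr φ y b := by
  simp [chr, hadd, mul_add, Finset.sum_add_distrib, sgn_add]

lemma map_one_of_add (hadd : ∀ a b : G, φ (a * b) = φ a + φ b) : φ 1 = 0 := by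
  have := hadd 1 1
  simpa using this

lemma map_inv_of_add (hadd : ∀ a b : G, φ (a * b) = φ a + φ b) (a : G) : φ a⁻¹ = φ a := by
  have h := hadd a⁻¹ a
  rw [inv_mul_cancel, map_one_of_add hadd] at h
  rw [eq_neg_of_add_eq_zero_left h.symm]
  funext j
  exact ZMod.neg_eq_self_mod_two _

lemma chr_inv (hadd : ∀ a b : G, φ (a * b) = φ a + φ b) (y : Fin m → ZMod 2) (a : G) :
    chr φ y a⁻¹ = chr φ y a := by
  simp [chr, map_inv_of_add hadd]

end Characters

/-! ### The connecting set and the adjacency operator -/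

/-- Eigenvalues of a matrix, in terms of plain functions instead of Euclidean vectors. -/
lemma hasEigenvalue_iff {V : Type*} [Fintype V] [DecidableEq V] (A : Matrix V V ℂ) (θ : ℂ) :
    Module.End.HasEigenvalue (Matrix.toEuclideanLin A) θ ↔
      ∃ f : V → ℂ, f ≠ 0 ∧ A.mulVec f = θ • f := by
  constructor
  · intro h
    obtain ⟨v, hv⟩ := h.exists_hasEigenvector
    refine ⟨v.ofLp, fun h0 => hv.2 ?_, ?_⟩
    · ext i
      exact congrFun h0 i
    · have h2 := congrArg WithLp.ofLp hv.apply_eq_smul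
      simpa using h2
  · rintro ⟨f, hf, hA⟩
    refine Module.End.hasEigenvalue_of_hasEigenvector (x := WithLp.toLp 2 f) ⟨?_, ?_⟩
    · rw [Module.End.mem_eigenspace_iff, Matrix.toLpLin_toLp]
      simp [hA]
    · intro h0
      exact hf (congrArg WithLp.ofLp h0)

section Structure

variable {G : Type*} [Group G]

lemma mem_center_iff_of_card [Finite G] {z : G} (hc : Nat.card (Subgroup.center G) = 2)
    (hz : z ∈ Subgroup.center G) (hz1 : z ≠ 1) (g : G) :
    g ∈ Subgroup.center G ↔ g = 1 ∨ g = z := by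
  have h : ({1, z} : Set G) = (Subgroup.center G : Set G) := by
    apply Set.eq_of_subset_of_ncard_le
    · rintro a (rfl | rfl)
      · exact one_mem _
      · exact hz
    · rw [Set.ncard_pair hz1.symm]
      exact hc.le
    · exact Set.toFinite _
  rw [← SetLike.mem_coe, ← h]
  simp

/-- Commutators lie in `{1, z}`, so a conjugacy class of size two is a coset of the center. -/
lemma conjClass_eq [Finite G] {z : G} (hcen : ∀ g : G, g ∈ Subgroup.center G ↔ g = 1 ∨ g = z)
    (hz1 : z ≠ 1) (hcomm : ∀ g h : G, g * h * g⁻¹ * h⁻¹ ∈ Subgroup.center G)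
    {a : G} (ha : Nat.card {h : G | IsConj a h} = 2) :
    {h : G | IsConj a h} = {a, a * z} := by
  have hz : z ∈ Subgroup.center G := (hcen z).2 (Or.inr rfl)
  apply Set.eq_of_subset_of_ncard_le
  · intro h hh
    obtain ⟨c, rfl⟩ := isConj_iff.mp hh
    rcases (hcen _).1 (hcomm c a) with h1 | h1
    · left
      exact mul_inv_eq_one.mp h1
    · right
      rw [mul_inv_eq_iff_eq_mul] at h1
      rw [h1]
      exact (Subgroup.mem_center_iff.mp hz a).symm
  · rw [Set.ncard_pair (by simpa using hz1)]
    exact ha.ge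
  · exact Set.toFinite _

/-- A sum over the connecting set splits into the contribution of `z` and one pair
`{xᵢ, xᵢ z}` for each conjugacy class. -/
lemma sum_connecting [DecidableEq G] {ℓ : ℕ} {z : G} {S : Finset G} {x : Fin ℓ → G} (hz1 : z ≠ 1)
    (hcl : ∀ i, {h : G | IsConj (x i) h} = {x i, x i * z})
    (hxd : ∀ i j, i ≠ j → ¬ IsConj (x i) (x j))
    (hdec : (S : Set G) \ {z} = ⋃ i, {h : G | IsConj (x i) h}) (F : G → ℂ) :
    ∑ s ∈ S, F s = (if z ∈ S then F z else 0) + ∑ i, (F (x i) + F (x i * z)) := by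
  have hS : S.erase z = Finset.univ.biUnion fun i => ({x i, x i * z} : Finset G) := by
    ext s
    have h := Set.ext_iff.mp hdec s
    simp only [hcl] at h
    simp only [Set.mem_sdiff, Finset.mem_coe, Set.mem_singleton_iff, Set.mem_iUnion,
      Set.mem_insert_iff] at h
    simp only [Finset.mem_erase, Finset.mem_biUnion, Finset.mem_univ, true_and,
      Finset.mem_insert, Finset.mem_singleton]
    rw [and_comm, h]
  have hsum : ∑ s ∈ S.erase z, F s = ∑ i, (F (x i) + F (x i * z)) := by
    rw [hS, Finset.sum_biUnion]
    · refine Finset.sum_congr rfl fun i _ => ?_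
      rw [Finset.sum_pair (by simpa using hz1)]
    · intro i _ j _ hij
      rw [Function.onFun, Finset.disjoint_left]
      intro s hi hj
      have hi' : IsConj (x i) s := by
        change s ∈ {h : G | IsConj (x i) h}
        rw [hcl]; simpa using hi
      have hj' : IsConj (x j) s := by
        change s ∈ {h : G | IsConj (x j) h}
        rw [hcl]; simpa using hj
      exact hxd i j hij (hi'.trans hj'.symm)
  rw [← hsum]
  split_ifs with hzS
  · exact (Finset.add_sum_erase S F hzS).symm
  · rw [Finset.erase_eq_of_notMem hzS, zero_add]

/-- The eigenvalue of the character `χ_y`. -/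
lemma sum_chr [DecidableEq G] {m ℓ : ℕ} {φ : G → (Fin m → ZMod 2)} {z : G} {S : Finset G}
    {x : Fin ℓ → G}
    (hsum : ∀ F : G → ℂ,
      ∑ s ∈ S, F s = (if z ∈ S then F z else 0) + ∑ i, (F (x i) + F (x i * z)))
    (hadd : ∀ a b : G, φ (a * b) = φ a + φ b) (hφz : φ z = 0) (y : Fin m → ZMod 2) :
    ∑ s ∈ S, chr φ y s
      = ((4 * (eY φ x y : ℤ) - 2 * (ℓ : ℤ) + (if z ∈ S then 1 else 0) : ℤ) : ℂ) := by
  -- `(-1)^a = 2 [a = 0] - 1`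
  have h1 : ∀ i, chr φ y (x i) = 2 * (if (∑ j, y j * φ (x i) j) = 0 then 1 else 0) - 1 := by
    intro i
    unfold chr sgn
    split_ifs <;> norm_num
  have h2 : ∑ i, chr φ y (x i) = 2 * (eY φ x y : ℂ) - ℓ := by
    simp only [h1, Finset.sum_sub_distrib, ← Finset.mul_sum, Finset.sum_boole, eY]
    simp
  rw [hsum]
  simp only [chr_mul hadd, chr_of_map_zero y hφz, mul_one, ← two_mul, ← Finset.mul_sum, h2]
  push_cast
  ring

variable [Fintype G] [DecidableEq G]

lemma cayAdj_mulVec (S : Finset G) (f : G → ℂ) (g : G) :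
    (cayAdj S).mulVec f g = ∑ s ∈ S, f (s⁻¹ * g) := by
  simp only [Matrix.mulVec, dotProduct, cayAdj, Matrix.of_apply, ite_mul, one_mul, zero_mul]
  rw [← Equiv.sum_comp ((Equiv.inv G).trans (Equiv.mulRight g))]
  simp [Finset.sum_ite_mem]

/-- On functions that are odd under translation by `z`, the pairs `{xᵢ, xᵢ z}` cancel and only the
contribution of `z` to the adjacency operator survives. -/
lemma mulVec_odd {ℓ : ℕ} {z : G} {S : Finset G} {x : Fin ℓ → G}
    (hz2 : z ^ 2 = 1)
    (hsum : ∀ F : G → ℂ,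
      ∑ s ∈ S, F s = (if z ∈ S then F z else 0) + ∑ i, (F (x i) + F (x i * z)))
    {f : G → ℂ} (hf : ∀ g, f (z * g) = -f g) :
    (cayAdj S).mulVec f = (-(if z ∈ S then 1 else 0) : ℂ) • f := by
  have hzi : z⁻¹ = z := inv_eq_of_mul_eq_one_left (by rw [← sq, hz2])
  funext g
  rw [cayAdj_mulVec, hsum]
  have h : ∀ i, f ((x i)⁻¹ * g) + f ((x i * z)⁻¹ * g) = 0 := fun i => by
    rw [mul_inv_rev, hzi, mul_assoc, hf, add_neg_cancel]
  simp only [h, hzi, hf]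
  split_ifs <;> simp

lemma mulVec_chr {m : ℕ} {φ : G → (Fin m → ZMod 2)}
    (hadd : ∀ a b : G, φ (a * b) = φ a + φ b) (S : Finset G) (y : Fin m → ZMod 2) :
    (cayAdj S).mulVec (chr φ y) = (∑ s ∈ S, chr φ y s) • chr φ y := by
  funext g
  rw [cayAdj_mulVec]
  simp [chr_mul hadd, chr_inv hadd, Finset.sum_mul]

/-- The Fourier transform diagonalizes the adjacency operator. -/
lemma coeff_mulVec {m : ℕ} {φ : G → (Fin m → ZMod 2)}
    (hadd : ∀ a b : G, φ (a * b) = φ a + φ b) (S : Finset G) (y : Fin m → ZMod 2) (f : G → ℂ) :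
    ∑ g, chr φ y g * (cayAdj S).mulVec f g =
      (∑ s ∈ S, chr φ y s) * ∑ g, chr φ y g * f g := by
  simp only [cayAdj_mulVec, Finset.mul_sum, Finset.sum_mul]
  rw [Finset.sum_comm]
  conv_rhs => rw [Finset.sum_comm]
  refine Finset.sum_congr rfl fun s _ => ?_
  rw [← Equiv.sum_comp (Equiv.mulLeft s)]
  simp [chr_mul hadd, mul_assoc]

/-- Fourier inversion: a function that is even under translation by `z` vanishes as soon as all of
its Fourier coefficients on `G/Z` do. -/
lemma eq_zero_of_coeff {m : ℕ} {φ : G → (Fin m → ZMod 2)} {z : G}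
    (hcen : ∀ g : G, g ∈ Subgroup.center G ↔ g = 1 ∨ g = z) (hz1 : z ≠ 1)
    (hadd : ∀ a b : G, φ (a * b) = φ a + φ b)
    (hker : ∀ a : G, φ a = 0 ↔ a ∈ Subgroup.center G)
    {f : G → ℂ} (hf : ∀ g, f (z * g) = f g) (hc : ∀ y, ∑ g, chr φ y g * f g = 0) : f = 0 := by
  funext h
  have h0 : ∑ y, chr φ y h * ∑ g, chr φ y g * f g = 0 := by simp [hc]
  -- Substituting `g = a * h` turns the double sum into `∑ a, (∑ y, χ_y(a)) f(a h)`.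
  have h1 : ∑ y, chr φ y h * ∑ g, chr φ y g * f g = ∑ a, (∑ y, chr φ y a) * f (a * h) := by
    simp only [Finset.sum_mul, Finset.mul_sum]
    conv_rhs => rw [Finset.sum_comm]
    refine Finset.sum_congr rfl fun y _ => ?_
    rw [← Equiv.sum_comp (Equiv.mulRight h)]
    refine Finset.sum_congr rfl fun a _ => ?_
    have hsq : chr φ y h * chr φ y h = 1 := by
      nth_rewrite 1 [← chr_inv hadd y h]
      rw [← chr_mul hadd, inv_mul_cancel, chr_of_map_zero y (map_one_of_add hadd)]
    simp only [Equiv.coe_mulRight, chr_mul hadd]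
    linear_combination chr φ y a * f (a * h) * hsq
  have h2 : ∑ a, (∑ y, chr φ y a) * f (a * h)
      = ∑ a ∈ ({1, z} : Finset G), (∑ y, chr φ y a) * f (a * h) := by
    symm
    refine Finset.sum_subset (Finset.subset_univ _) fun a _ ha => ?_
    have : φ a ≠ 0 := fun h3 => ha (by simpa using (hcen a).1 ((hker a).1 h3))
    rw [sum_chr_eq_zero this, zero_mul]
  have hφz : φ z = 0 := (hker z).2 ((hcen z).2 (Or.inr rfl))
  rw [h1, h2, Finset.sum_pair hz1.symm] at h0
  simp only [chr_of_map_zero _ hφz, chr_of_map_zero _ (map_one_of_add hadd), hf, one_mul] at h0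
  have hcard : (∑ _y : Fin m → ZMod 2, (1 : ℂ)) ≠ 0 := by simp
  have h4 : (∑ _y : Fin m → ZMod 2, (1 : ℂ)) * (2 * f h) = 0 := by linear_combination h0
  simpa [hcard] using h4

/-! ### The spectrum -/

/-- The spectrum in uniform form, with `ε = [z ∈ S]`. -/
lemma hasEigenvalue_cayAdj_iff {m ℓ : ℕ} {φ : G → (Fin m → ZMod 2)} {z : G} {S : Finset G}
    {x : Fin ℓ → G} (hcen : ∀ g : G, g ∈ Subgroup.center G ↔ g = 1 ∨ g = z)
    (hz2 : z ^ 2 = 1) (hz1 : z ≠ 1)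
    (hadd : ∀ a b : G, φ (a * b) = φ a + φ b)
    (hker : ∀ a : G, φ a = 0 ↔ a ∈ Subgroup.center G)
    (hsum : ∀ F : G → ℂ,
      ∑ s ∈ S, F s = (if z ∈ S then F z else 0) + ∑ i, (F (x i) + F (x i * z))) (θ : ℂ) :
    Module.End.HasEigenvalue (Matrix.toEuclideanLin (cayAdj S)) θ ↔
      (∃ y, ((4 * (eY φ x y : ℤ) - 2 * (ℓ : ℤ) + (if z ∈ S then 1 else 0) : ℤ) : ℂ) = θ) ∨
        θ = -(if z ∈ S then 1 else 0) := by
  have hz : z ∈ Subgroup.center G := (hcen z).2 (Or.inr rfl)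
  have hzc : ∀ g, g * z = z * g := Subgroup.mem_center_iff.mp hz
  have hzz : z * z = 1 := by rw [← sq, hz2]
  have hφz : φ z = 0 := (hker z).2 hz
  rw [hasEigenvalue_iff]
  constructor
  · rintro ⟨f, hf0, hf⟩
    by_cases heven : ∀ g, f (z * g) = f g
    · left
      obtain ⟨y, hy⟩ : ∃ y, ∑ g, chr φ y g * f g ≠ 0 := by
        by_contra! hall
        exact hf0 (eq_zero_of_coeff hcen hz1 hadd hker heven hall)
      refine ⟨y, ?_⟩
      have h := coeff_mulVec hadd S y f
      rw [sum_chr hsum hadd hφz] at h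
      refine mul_right_cancel₀ hy (h.symm.trans ?_)
      simp only [hf, Pi.smul_apply, smul_eq_mul, Finset.mul_sum]
      exact Finset.sum_congr rfl fun g _ => by ring
    · right
      push Not at heven
      obtain ⟨g, hg⟩ := heven
      -- The odd part of `f` is nonzero, and is an eigenvector for `θ` because `z` is central.
      have hodd := mulVec_odd hz2 hsum (f := fun a => f a - f (z * a)) fun a => by
        rw [← mul_assoc, hzz, one_mul]; ring
      have h1 := congrFun hodd g
      have h2 : (cayAdj S).mulVec (fun a => f a - f (z * a)) g = θ * (f g - f (z * g)) := by
        have e1 := congrFun hf g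
        have e2 := congrFun hf (z * g)
        rw [cayAdj_mulVec] at e1 e2
        rw [cayAdj_mulVec, Finset.sum_sub_distrib]
        have e3 : ∀ s : G, z * (s⁻¹ * g) = s⁻¹ * (z * g) := fun s => by
          rw [← mul_assoc, ← hzc, mul_assoc]
        simp only [e3, e1, e2, Pi.smul_apply, smul_eq_mul]
        ring
      rw [h2] at h1
      exact mul_right_cancel₀ (sub_ne_zero.mpr (Ne.symm hg)) h1
  · rintro (⟨y, rfl⟩ | rfl)
    · refine ⟨chr φ y, fun h => ?_, ?_⟩
      · have := congrFun h 1
        rw [chr_of_map_zero y (map_one_of_add hadd)] at this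
        exact one_ne_zero this
      · rw [mulVec_chr hadd, sum_chr hsum hadd hφz]
    · -- The odd function `δ_1 - δ_z`.
      refine ⟨fun g => (if g = 1 then 1 else 0) - (if g = z then 1 else 0), fun h => ?_,
        mulVec_odd hz2 hsum fun g => ?_⟩
      · have := congrFun h 1
        simp [hz1.symm] at this
      · have e1 : z * g = 1 ↔ g = z := by
          constructor
          · intro h
            exact mul_left_cancel (h.trans hzz.symm)
          · rintro rfl
            exact hzz
        have e2 : z * g = z ↔ g = 1 := mul_eq_left
        simp only [e1, e2]
        ring

end Structure

/-- The normal Cayley graph of an extraspecial `2`-group is integral, and its set of eigenvalues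
is `{4e_y − 2ℓ + 1} ∪ {−1}` when `z ∈ S`, and `{4e_y − 2ℓ} ∪ {0}` when `z ∉ S`. -/
theorem spectrum_extraspecial {G : Type*} [Group G] [Fintype G] [DecidableEq G]
    (n ℓ : ℕ) (hn : 1 ≤ n) (hG : IsExtraspecial 2 n G)
    (z : G) (hz : z ∈ Subgroup.center G) (hz2 : z ^ 2 = 1) (hz1 : z ≠ 1)
    (S : Finset G) (hS : IsNormalConnecting S)
    (hgen : Subgroup.closure (S : Set G) = ⊤)
    (φ : G → (Fin (2 * n) → ZMod 2))
    (hadd : ∀ a b : G, φ (a * b) = φ a + φ b)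
    (hsurj : Function.Surjective φ)
    (hker : ∀ a : G, φ a = 0 ↔ a ∈ Subgroup.center G)
    (x : Fin ℓ → G)
    (hx2 : ∀ i, Nat.card {h : G | IsConj (x i) h} = 2)
    (hxd : ∀ i j, i ≠ j → ¬ IsConj (x i) (x j))
    (hdec : (S : Set G) \ {z} = ⋃ i, {h : G | IsConj (x i) h}) :
    (∀ θ : ℂ, Module.End.HasEigenvalue (Matrix.toEuclideanLin (cayAdj S)) θ →
        ∃ k : ℤ, θ = (k : ℂ)) ∧
    (z ∈ S →
      {θ : ℂ | Module.End.HasEigenvalue (Matrix.toEuclideanLin (cayAdj S)) θ} =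
        (Set.range fun y : Fin (2 * n) → ZMod 2 =>
          ((4 * (eY φ x y : ℤ) - 2 * (ℓ : ℤ) + 1 : ℤ) : ℂ)) ∪ {-1}) ∧
    (z ∉ S →
      {θ : ℂ | Module.End.HasEigenvalue (Matrix.toEuclideanLin (cayAdj S)) θ} =
        (Set.range fun y : Fin (2 * n) → ZMod 2 =>
          ((4 * (eY φ x y : ℤ) - 2 * (ℓ : ℤ) : ℤ) : ℂ)) ∪ {0}) := by
  obtain ⟨-, hc, -, hcomm⟩ := hG
  have hcen := mem_center_iff_of_card hc hz hz1
  have hsum := sum_connecting hz1 (fun i => conjClass_eq hcen hz1 hcomm (hx2 i)) hxd hdec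
  have key := hasEigenvalue_cayAdj_iff hcen hz2 hz1 hadd hker hsum
  refine ⟨fun θ hθ => ?_, fun hzS => ?_, fun hzS => ?_⟩
  · rcases (key θ).1 hθ with ⟨y, rfl⟩ | rfl
    · exact ⟨_, rfl⟩
    · exact ⟨-(if z ∈ S then 1 else 0), by push_cast; rfl⟩
  · ext θ
    have h := key θ
    simp only [if_pos hzS] at h
    exact h
  · ext θ
    have h := key θ
    simp only [if_neg hzS, add_zero, neg_zero] at h
    exact h
end
end

section
/- Let p be a prime, q a power of p, and let P be the point set of the projective space PG(m−1,q) (the projectivization of the vector space 𝔽_q^m). Let Y be a nonempty proper subset of P, and let C be a collection of subsets of P that is invariant under the action of GL(m,q) on P and contains at least one nonempty proper subset of P. Then gcd{ |Y ∩ H| : H ∈ C } is a power of p. -/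
noncomputable section

/-!
It suffices to show that no prime `ℓ ≠ p` divides every `|Y ∩ H|`: this also excludes that all the
intersections are empty, and then the gcd is nonzero and has no prime factor other than `p`.

The action on points being 2-transitive, `Y` and some member `H` of `C` can be moved so that both
contain `[1 : 0 : … : 0]` and miss `[1 : 1 : … : 1]`. Their indicator functions `u`, `v` on the
affine space `V = 𝔽_q^n` of points with nonzero first coordinate are then nonconstant. The linear
maps `(t, x) ↦ (t, L x + t w)` act on `V` by `x ↦ L x + w`, and on the hyperplane at infinity in a
way independent of `w`. So if `ℓ` divides every intersection size then, in characteristic `ℓ`,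
`∑ x, u x * v (L x + w)` is independent of `w` for every `L ∈ GL(V)`.

As `ℓ ≠ p`, there is a finite extension `K` of `𝔽_ℓ` with a primitive additive character
`ψ : 𝔽_q → K`, and Fourier inversion holds for functions `V → K`. Comparing Fourier coefficients
at a frequency `b ≠ 0`, the product of the coefficients of `v` at `b` and of `u` at `-Lᵀ b`
vanishes. Since `Lᵀ b` can be any nonzero vector, all nontrivial coefficients of `u`, or all those
of `v`, vanish (`exists_const_of_correlation_const`), so one of the two functions is constant.
-/

/-! ### Fourier analysis on `𝔽_q^n` in coprime characteristic -/

section Fourier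

variable {F K : Type*} [Field F] [Fintype F] [Field K] {n : ℕ}

/-- The Fourier coefficient of `u : 𝔽_q^n → K` at the frequency `b`, with respect to the additive
character `ψ` of `𝔽_q` and the standard bilinear form. No normalization and no sign. -/
def dotFourier (ψ : AddChar F K) (u : (Fin n → F) → K) (b : Fin n → F) : K :=
  ∑ x, u x * ψ (b ⬝ᵥ x)

open Classical in
theorem sum_char_dotProduct {ψ : AddChar F K} (hψ : ψ.IsPrimitive) (z : Fin n → F) :
    ∑ a : Fin n → F, ψ (a ⬝ᵥ z) = if z = 0 then (Fintype.card (Fin n → F) : K) else 0 := by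
  split_ifs with hz
  · simp [hz]
  · let φ : (Fin n → F) →+ F :=
      { toFun := fun a => a ⬝ᵥ z
        map_zero' := zero_dotProduct z
        map_add' := fun a b => add_dotProduct a b z }
    have h : ψ.compAddMonoidHom φ ≠ 1 := by
      obtain ⟨i, hi⟩ := Function.ne_iff.mp hz
      intro h
      apply hψ hi
      ext t
      have := DFunLike.congr_fun h (Pi.single i t)
      simpa [φ, AddChar.mulShift_apply, mul_comm] using this
    have := AddChar.sum_eq_zero_of_ne_one h
    simpa [φ] using this

theorem eq_of_dotFourier_eq_zero {ψ : AddChar F K} (hψ : ψ.IsPrimitive)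
    (hF : (Fintype.card F : K) ≠ 0) (u : (Fin n → F) → K)
    (hu : ∀ a, a ≠ 0 → dotFourier ψ u a = 0) (x y : Fin n → F) : u x = u y := by
  classical
  have hinv (x : Fin n → F) : dotFourier ψ u 0 = (Fintype.card (Fin n → F) : K) * u x := by
    have h1 : ∑ a, dotFourier ψ u a * ψ (a ⬝ᵥ (-x)) = dotFourier ψ u 0 := by
      rw [Finset.sum_eq_single 0]
      · simp
      · intro b _ hb
        rw [hu b hb, zero_mul]
      · simp
    rw [← h1]
    simp only [dotFourier, Finset.sum_mul]
    rw [Finset.sum_comm]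
    have h2 (z : Fin n → F) : ∑ a, u z * ψ (a ⬝ᵥ z) * ψ (a ⬝ᵥ (-x)) =
        if z = x then u z * (Fintype.card (Fin n → F) : K) else 0 := by
      simp only [mul_assoc, ← AddChar.map_add_eq_mul, ← dotProduct_add, ← Finset.mul_sum]
      rw [sum_char_dotProduct hψ, ← sub_eq_add_neg]
      simp [sub_eq_zero]
    simp only [h2, Finset.sum_ite_eq', Finset.mem_univ, if_true, mul_comm]
  have hV : (Fintype.card (Fin n → F) : K) ≠ 0 := by
    simp [hF]
  exact mul_left_cancel₀ hV ((hinv x).symm.trans (hinv y))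

theorem exists_linearEquiv_dotProduct {a b : Fin n → F} (ha : a ≠ 0) (hb : b ≠ 0) :
    ∃ L : (Fin n → F) ≃ₗ[F] (Fin n → F), ∀ x, b ⬝ᵥ L x = a ⬝ᵥ x := by
  let f := (LinearEquiv.toSpanNonzeroSingleton F _ b hb).symm ≪≫ₗ
    LinearEquiv.toSpanNonzeroSingleton F _ a ha
  obtain ⟨M, hM⟩ := Submodule.exists_linearEquiv_restrict_eq f
  have hMb : M b = a := by
    have h := hM (LinearEquiv.toSpanNonzeroSingleton F _ b hb 1)
    simp only [f, LinearEquiv.trans_apply, LinearEquiv.symm_apply_apply] at h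
    simpa using h.symm
  let A := LinearMap.toMatrix' (M : (Fin n → F) →ₗ[F] (Fin n → F))
  let B := LinearMap.toMatrix' (M.symm : (Fin n → F) →ₗ[F] (Fin n → F))
  have hAB : A * B = 1 := by simp [A, B, ← LinearMap.toMatrix'_comp]
  have hBA : B * A = 1 := by simp [A, B, ← LinearMap.toMatrix'_comp]
  refine ⟨Matrix.toLin'OfInv (M := B.transpose) (M' := A.transpose)
    (by rw [← Matrix.transpose_mul, hAB, Matrix.transpose_one])
    (by rw [← Matrix.transpose_mul, hBA, Matrix.transpose_one]), fun x => ?_⟩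
  have hAb : A.mulVec b = a := by simp [A, hMb]
  have hx : Matrix.toLin'OfInv (M := B.transpose) (M' := A.transpose)
      (by rw [← Matrix.transpose_mul, hAB, Matrix.transpose_one])
      (by rw [← Matrix.transpose_mul, hBA, Matrix.transpose_one]) x = A.transpose.mulVec x := by
    simp [Matrix.toLin'OfInv]
  rw [hx, Matrix.dotProduct_mulVec, Matrix.vecMul_transpose, hAb]

/-- If all correlations of `u` with the linear reparametrizations of `v` are constant in the
translation parameter, then `u` or `v` is constant. -/
theorem exists_const_of_correlation_const {ψ : AddChar F K} (hψ : ψ.IsPrimitive)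
    (hF : (Fintype.card F : K) ≠ 0) (u v : (Fin n → F) → K)
    (c : ((Fin n → F) ≃ₗ[F] (Fin n → F)) → K)
    (h : ∀ (L : (Fin n → F) ≃ₗ[F] (Fin n → F)) (w : Fin n → F), ∑ x, u x * v (L x + w) = c L) :
    (∀ x y, u x = u y) ∨ (∀ x y, v x = v y) := by
  classical
  by_contra! hcon
  obtain ⟨⟨x₁, y₁, hu⟩, ⟨x₂, y₂, hv⟩⟩ := hcon
  obtain ⟨a, ha, hua⟩ : ∃ a, a ≠ 0 ∧ dotFourier ψ u a ≠ 0 := by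
    by_contra! H
    exact hu (eq_of_dotFourier_eq_zero hψ hF u H _ _)
  obtain ⟨b, hb, hvb⟩ : ∃ a, a ≠ 0 ∧ dotFourier ψ v a ≠ 0 := by
    by_contra! H
    exact hv (eq_of_dotFourier_eq_zero hψ hF v H _ _)
  obtain ⟨L, hL⟩ := exists_linearEquiv_dotProduct (neg_ne_zero.mpr ha) hb
  -- The Fourier coefficient at `b` of the correlation, as a function of the translation `w`.
  have h1 : ∑ w, ψ (b ⬝ᵥ w) * ∑ x, u x * v (L x + w) = 0 := by
    simp only [h, ← Finset.sum_mul]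
    have := sum_char_dotProduct hψ b
    simp only [dotProduct_comm _ b, hb, if_false] at this
    rw [this, zero_mul]
  have h2 : ∑ w, ψ (b ⬝ᵥ w) * ∑ x, u x * v (L x + w) =
      dotFourier ψ u a * dotFourier ψ v b := by
    simp only [Finset.mul_sum]
    rw [Finset.sum_comm, dotFourier, Finset.sum_mul]
    refine Finset.sum_congr rfl fun x _ => ?_
    rw [dotFourier, Finset.mul_sum]
    refine Fintype.sum_equiv (Equiv.addLeft (L x)) _ _ fun w => ?_
    have hw : b ⬝ᵥ w = a ⬝ᵥ x + b ⬝ᵥ (L x + w) := by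
      rw [dotProduct_add, hL, neg_dotProduct]
      ring
    rw [hw, AddChar.map_add_eq_mul, Equiv.coe_addLeft]
    ring
  exact mul_ne_zero hua hvb (h2.symm.trans h1)

end Fourier

/-! ### The affine chart and its affine transformations -/

section Chart

variable {F : Type*} [Field F] {n : ℕ}

theorem cons_one_ne_zero (x : Fin n → F) : (Fin.cons 1 x : Fin (n + 1) → F) ≠ 0 := fun h => by
  have := congrFun h 0
  simp at this

/-- The affine chart `x ↦ [1 : x]`, whose image is the complement of a hyperplane. -/
def chart (x : Fin n → F) : Projectivization F (Fin (n + 1) → F) :=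
  Projectivization.mk F (Fin.cons 1 x) (cons_one_ne_zero x)

theorem chart_injective : Function.Injective (chart : (Fin n → F) → _) := by
  intro x y h
  obtain ⟨t, ht⟩ := (Projectivization.mk_eq_mk_iff' F _ _ _ _).mp h
  have h0 : t = 1 := by simpa using congrFun ht 0
  ext i
  simpa [h0] using (congrFun ht i.succ).symm

theorem mem_range_chart_of_ne {v : Fin (n + 1) → F} (hv : v ≠ 0) (h : v 0 ≠ 0) :
    Projectivization.mk F v hv ∈ Set.range (chart : (Fin n → F) → _) := by
  refine ⟨(v 0)⁻¹ • Fin.tail v, (Projectivization.mk_eq_mk_iff' F _ _ _ _).mpr ⟨(v 0)⁻¹, ?_⟩⟩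
  ext i
  refine Fin.cases ?_ (fun i => ?_) i
  · simp [h]
  · simp [Fin.tail]

/-- The linear map `(t, x) ↦ (t, L x + t w)`, which acts on the affine chart by
`x ↦ L x + w`. -/
def affineEquiv (L : (Fin n → F) ≃ₗ[F] (Fin n → F)) (w : Fin n → F) :
    (Fin (n + 1) → F) ≃ₗ[F] (Fin (n + 1) → F) where
  toFun y := Fin.cons (y 0) (L (Fin.tail y) + y 0 • w)
  invFun y := Fin.cons (y 0) (L.symm (Fin.tail y - y 0 • w))
  map_add' y z := by
    ext i
    refine Fin.cases ?_ (fun i => ?_) i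
    · simp
    · have : Fin.tail (y + z) = Fin.tail y + Fin.tail z := rfl
      simp [this, add_smul]
      ring
  map_smul' t y := by
    ext i
    refine Fin.cases ?_ (fun i => ?_) i
    · simp
    · have : Fin.tail (t • y) = t • Fin.tail y := rfl
      simp [this]
      ring
  left_inv y := by simp
  right_inv y := by simp

theorem affineEquiv_smul_chart (L : (Fin n → F) ≃ₗ[F] (Fin n → F)) (w x : Fin n → F) :
    affineEquiv L w • chart x = chart (L x + w) := by
  rw [chart, Projectivization.smul_mk, chart]
  congr 1
  simp [affineEquiv]

/-- Translations act trivially on the hyperplane at infinity. -/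
theorem affineEquiv_smul_of_notMem (L : (Fin n → F) ≃ₗ[F] (Fin n → F)) (w : Fin n → F)
    (P : Projectivization F (Fin (n + 1) → F)) (hP : P ∉ Set.range (chart : (Fin n → F) → _)) :
    affineEquiv L w • P = affineEquiv L 0 • P := by
  induction P with | h v hv =>
  have h0 : v 0 = 0 := by
    by_contra h
    exact hP (mem_range_chart_of_ne hv h)
  rw [Projectivization.smul_mk, Projectivization.smul_mk]
  congr 1
  simp [affineEquiv, h0]

end Chart

/-! ### Excluding prime divisors other than `p` -/

open scoped Pointwise

section Main

variable {F : Type*} [Field F] [Fintype F]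

/-- Two sets of points that both separate the same two points of the affine chart cannot have all
the intersections of their translates divisible by `ℓ`. -/
theorem false_of_chart {n : ℕ} (l : ℕ) [Fact l.Prime] (hl : ringChar F ≠ l)
    (Y H : Set (Projectivization F (Fin (n + 1) → F))) (s t : Fin n → F)
    (hYs : chart s ∈ Y) (hYt : chart t ∉ Y) (hHs : chart s ∈ H) (hHt : chart t ∉ H)
    (h : ∀ e : (Fin (n + 1) → F) ≃ₗ[F] (Fin (n + 1) → F), l ∣ Nat.card ↥(Y ∩ e • H)) : False := by
  classical
  have hchar : ringChar (ZMod l) ≠ ringChar F := by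
    rw [ZMod.ringChar_zmod_n]
    exact hl.symm
  let Ψ := AddChar.FiniteField.primitiveChar F (ZMod l) hchar
  let K := CyclotomicField Ψ.n (ZMod l)
  have : CharP K l := charP_of_injective_algebraMap (algebraMap (ZMod l) K).injective l
  have hF : (Fintype.card F : K) ≠ 0 := by
    obtain ⟨k, hk, hcard⟩ := FiniteField.card F (ringChar F)
    rw [Ne, CharP.cast_eq_zero_iff K l, hcard]
    intro hdvd
    exact hl ((Nat.prime_dvd_prime_iff_eq Fact.out hk).mp
      ((Fact.out : l.Prime).dvd_of_dvd_pow hdvd)).symm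
  have : Finite (Projectivization F (Fin (n + 1) → F)) := inferInstance
  let := Fintype.ofFinite (Projectivization F (Fin (n + 1) → F))
  let U : Projectivization F (Fin (n + 1) → F) → K := fun P => if P ∈ Y then 1 else 0
  let W : Projectivization F (Fin (n + 1) → F) → K := fun P => if P ∈ H then 1 else 0
  have hsum (e : (Fin (n + 1) → F) ≃ₗ[F] (Fin (n + 1) → F)) : ∑ P, U P * W (e • P) = 0 := by
    have h1 := (CharP.cast_eq_zero_iff K l _).mpr (h e⁻¹)
    rw [← h1, Nat.card_eq_fintype_card, Fintype.card_subtype, Finset.natCast_card_filter]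
    refine Finset.sum_congr rfl fun P _ => ?_
    by_cases hY : P ∈ Y <;> by_cases hH : e • P ∈ H <;>
      simp [U, W, hY, hH, Set.mem_inv_smul_set_iff]
  have hmain := exists_const_of_correlation_const Ψ.prim hF
    (fun x => U (chart x)) (fun x => W (chart x))
    (fun L => -∑ P with P ∉ Set.range (chart : (Fin n → F) → _), U P * W (affineEquiv L 0 • P))
    (by
      intro L w
      have h1 := hsum (affineEquiv L w)
      rw [← Finset.sum_filter_add_sum_filter_not _
        (fun P => P ∈ Set.range (chart : (Fin n → F) → _))] at h1
      rw [eq_neg_iff_add_eq_zero, ← h1]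
      congr 1
      · have : Finset.univ.filter (fun P => P ∈ Set.range (chart : (Fin n → F) → _)) =
            Finset.univ.image (chart : (Fin n → F) → _) := by
          ext P
          simp
        rw [this, Finset.sum_image chart_injective.injOn]
        simp only [affineEquiv_smul_chart]
      · refine Finset.sum_congr rfl fun P hP => ?_
        rw [affineEquiv_smul_of_notMem L w P (Finset.mem_filter.mp hP).2])
  rcases hmain with hc | hc
  · simpa [U, hYs, hYt] using hc s t
  · simpa [W, hHs, hHt] using hc s t

/-- No prime other than the characteristic divides all intersections of `Y` with the
`GL`-translates of `H`. -/
theorem false_of_forall_dvd {m : ℕ} (l : ℕ) [Fact l.Prime] (hl : ringChar F ≠ l)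
    (Y H : Set (Projectivization F (Fin m → F))) (hY1 : Y.Nonempty) (hY2 : Y ≠ Set.univ)
    (hH1 : H.Nonempty) (hH2 : H ≠ Set.univ)
    (h : ∀ e : (Fin m → F) ≃ₗ[F] (Fin m → F), l ∣ Nat.card ↥(Y ∩ e • H)) : False := by
  obtain ⟨y, hy⟩ := hY1
  obtain ⟨y', hy'⟩ := (Set.ne_univ_iff_exists_notMem Y).mp hY2
  obtain ⟨z, hz⟩ := hH1
  obtain ⟨z', hz'⟩ := (Set.ne_univ_iff_exists_notMem H).mp hH2
  have hyy : y ≠ y' := fun h => hy' (h ▸ hy)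
  have hzz : z ≠ z' := fun h => hz' (h ▸ hz)
  -- In dimension at most one there are no two distinct points.
  obtain ⟨n, rfl⟩ : ∃ n, m = n + 2 := by
    rcases m with _ | _ | n
    · exact absurd (Subsingleton.elim _ _) y.rep_nonzero
    · exfalso
      have : Subsingleton (Fin (0 + 1)) := inferInstanceAs (Subsingleton (Fin 1))
      apply hyy
      rw [← y.mk_rep, ← y'.mk_rep, Projectivization.mk_eq_mk_iff']
      have h0 : y'.rep 0 ≠ 0 := fun h => y'.rep_nonzero (by
        ext i
        rw [Subsingleton.elim i 0, h, Pi.zero_apply])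
      refine ⟨y.rep 0 / y'.rep 0, ?_⟩
      ext i
      rw [Subsingleton.elim i 0]
      simp [h0]
    · exact ⟨n, rfl⟩
  have hst : chart (0 : Fin (n + 1) → F) ≠ chart 1 := chart_injective.ne zero_ne_one
  have htrans {a b c d : Projectivization F (Fin (n + 2) → F)} (hab : a ≠ b) (hcd : c ≠ d) :
      ∃ g : (Fin (n + 2) → F) ≃ₗ[F] (Fin (n + 2) → F), g • a = c ∧ g • b = d :=
    MulAction.is_two_pretransitive_iff.mp
      (Projectivization.linearEquiv_is_two_pretransitive F (Fin (n + 2) → F)) hab hcd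
  obtain ⟨g, hg, hg'⟩ := htrans hyy hst
  obtain ⟨k, hk, hk'⟩ := htrans hzz hst
  refine false_of_chart l hl (g • Y) (k • H) 0 1 ?_ ?_ ?_ ?_ fun e => ?_
  · rw [← hg]; exact Set.smul_mem_smul_set hy
  · rw [← hg', Set.smul_mem_smul_set_iff]; exact hy'
  · rw [← hk]; exact Set.smul_mem_smul_set hz
  · rw [← hk', Set.smul_mem_smul_set_iff]; exact hz'
  · have h1 := h (g⁻¹ * e * k)
    have h2 : g • Y ∩ e • k • H = g • (Y ∩ (g⁻¹ * e * k) • H) := by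
      rw [Set.smul_set_inter, smul_smul, smul_smul]
      congr 2
      group
    rw [h2]
    rwa [Nat.card_coe_set_eq, Set.ncard_smul_set, ← Nat.card_coe_set_eq]

end Main

/-- Let `P` be the point set of `PG(m−1,q)` (the projectivization of `F^m`, where `F` is a
finite field of order `q = p^e`). If `Y` is a nonempty proper subset of `P` and `C` is a
`GL(m,q)`-invariant collection of subsets of `P` containing at least one nonempty proper
subset, then `gcd { |Y ∩ H| : H ∈ C }` is a power of `p` (the gcd being characterized by:
it divides all the `|Y ∩ H|` and is divisible by every common divisor). -/
theorem gcd_intersections_is_prime_power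
    (p : ℕ) (hp : p.Prime) (F : Type*) [Field F] [Fintype F]
    (hq : ∃ e : ℕ, 1 ≤ e ∧ Fintype.card F = p ^ e) (m : ℕ)
    (Y : Set (Projectivization F (Fin m → F)))
    (hY1 : Y.Nonempty) (hY2 : Y ≠ Set.univ)
    (C : Set (Set (Projectivization F (Fin m → F))))
    (hC : ∀ H ∈ C, ∀ e : (Fin m → F) ≃ₗ[F] (Fin m → F),
      (Projectivization.map (e : (Fin m → F) →ₗ[F] (Fin m → F)) e.injective) '' H ∈ C)
    (hCne : ∃ H ∈ C, H.Nonempty ∧ H ≠ Set.univ) :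
    ∃ j : ℕ, (∀ H ∈ C, (p : ℕ) ^ j ∣ Nat.card ↥(Y ∩ H)) ∧
      ∀ r : ℕ, (∀ H ∈ C, r ∣ Nat.card ↥(Y ∩ H)) → r ∣ p ^ j := by
  obtain ⟨k, hk, hcard⟩ := hq
  have hpF : ringChar F = p := by
    obtain ⟨k', hk', hcard'⟩ := FiniteField.card F (ringChar F)
    have hdvd : ringChar F ∣ p ^ k := by
      rw [← hcard, hcard']
      exact dvd_pow_self _ k'.ne_zero
    exact (Nat.prime_dvd_prime_iff_eq hk' hp).mp (hk'.dvd_of_dvd_pow hdvd)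
  obtain ⟨H₀, hH₀, hne, hnu⟩ := hCne
  have key (l : ℕ) (hl : l.Prime) (h : ∀ H ∈ C, l ∣ Nat.card ↥(Y ∩ H)) : l = p := by
    by_contra hlp
    have := Fact.mk hl
    exact false_of_forall_dvd l (fun h => hlp (h.symm.trans hpF)) Y H₀ hY1 hY2 hne hnu
      fun e => h _ (hC H₀ hH₀ e)
  obtain ⟨H₁, hH₁, hpos⟩ : ∃ H ∈ C, Nat.card ↥(Y ∩ H) ≠ 0 := by
    by_contra! hzero
    -- If all intersections were empty, every prime would divide all their sizes.
    obtain ⟨l, hlp, hl⟩ := Nat.exists_infinite_primes (p + 1)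
    have := key l hl fun H hH => by rw [hzero H hH]; exact dvd_zero l
    omega
  have hpow (r : ℕ) (hr : ∀ H ∈ C, r ∣ Nat.card ↥(Y ∩ H)) : ∃ i, r = p ^ i := by
    have hr0 : r ≠ 0 := fun h0 => hpos (Nat.eq_zero_of_zero_dvd (h0 ▸ hr H₁ hH₁))
    exact ⟨_, Nat.eq_prime_pow_of_unique_prime_dvd hr0
      fun {d} hd hdr => key d hd fun H hH => hdr.trans (hr H hH)⟩
  -- The largest `j` such that `p ^ j` is a common divisor; such `j` are bounded by `|Y ∩ H₁|`.
  classical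
  let N := Nat.card ↥(Y ∩ H₁)
  let j := Nat.findGreatest (fun i => ∀ H ∈ C, p ^ i ∣ Nat.card ↥(Y ∩ H)) N
  refine ⟨j, Nat.findGreatest_spec (P := fun i => ∀ H ∈ C, p ^ i ∣ Nat.card ↥(Y ∩ H))
    (Nat.zero_le N) (by simp), fun r hr => ?_⟩
  obtain ⟨i, rfl⟩ := hpow r hr
  refine pow_dvd_pow p (Nat.le_findGreatest ?_ hr)
  exact (Nat.lt_pow_self hp.one_lt).le.trans
    (Nat.le_of_dvd (Nat.pos_of_ne_zero hpos) (hr H₁ hH₁))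
end
end

section
/- Let G be an extraspecial 2-group of order 2^{2n+1} with unique central involution z, and let S be a normal connecting set generating G with S ≠ G∖{1} and S∖{z} = K(x₁) ∪ … ∪ K(x_ℓ). Then the integers d = gcd({2ℓ+2} ∪ {|4e_y − 4ℓ| : y ∈ (ℤ/2ℤ)^{2n}}) and c = gcd({2ℓ} ∪ {|4e_y − 4ℓ| : y ∈ (ℤ/2ℤ)^{2n}}) are both powers of 2; in particular, gcd{ ℓ − e_y : y ∈ (ℤ/2ℤ)^{2n} } is a power of 2. -/
/-!
For `y` in `𝔽₂^(2n)` put `f y = ℓ - e_y`, the number of `i` with `y · x̄ᵢ = 1`. Let `χ` be the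
nontrivial sign character of `ℤ/2ℤ`. Since `2 [a = 1] = 1 - χ a`, orthogonality of characters gives,
for every index `k`,
`∑ y, χ (y · x̄ₖ) * 2 (f y) = ∑ i, ∑ y, (χ (y · x̄ₖ) - χ (y · (x̄ₖ + x̄ᵢ))) = - 2^(2n)`,
because `x̄ₖ ≠ 0` (a class of size 2 is not central) and the `x̄ᵢ` are pairwise distinct (a class of
size 2 is a full coset of the center). An index `k` exists, as otherwise `G` would be generated
by `z` and hence equal to its center. So `gcd (f y)` divides `2^(2n)`, and the other two
gcds divide `4 * gcd (f y)`; divisors of powers of `2` are powers of `2`.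
-/

noncomputable section

/-- The nontrivial character of `ℤ/2ℤ`, with values in `ℤ`. -/
def sgn2 (a : ZMod 2) : ℤ := if a = 0 then 1 else -1

lemma sgn2_add (a b : ZMod 2) : sgn2 (a + b) = sgn2 a * sgn2 b := by
  revert a b; decide

lemma sum_sgn2_eq_zero {m : ℕ} (w : Fin m → ZMod 2) (hw : w ≠ 0) :
    ∑ y : Fin m → ZMod 2, sgn2 (∑ j, y j * w j) = 0 := by
  obtain ⟨k, hk⟩ := Function.ne_iff.mp hw
  have hk1 : w k = 1 := by
    have : ∀ a : ZMod 2, a ≠ 0 → a = 1 := by decide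
    exact this _ hk
  -- Translation by the `k`-th basis vector flips the sign of every term.
  have h := Equiv.sum_comp (Equiv.addRight (Pi.single k (1 : ZMod 2)))
    (fun y : Fin m → ZMod 2 => sgn2 (∑ j, y j * w j))
  have h2 : ∀ y : Fin m → ZMod 2,
      sgn2 (∑ j, (Equiv.addRight (Pi.single k (1 : ZMod 2)) y) j * w j)
        = - sgn2 (∑ j, y j * w j) := by
    intro y
    have : ∑ j, (Equiv.addRight (Pi.single k (1 : ZMod 2)) y) j * w j
        = ∑ j, y j * w j + 1 := by
      simp [add_mul, Finset.sum_add_distrib, Pi.single_apply, hk1]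
    rw [this, sgn2_add]
    simp [sgn2]
  simp only [h2, Finset.sum_neg_distrib] at h
  linarith

/-- Fourier inversion for the indicator function of a family of distinct vectors `v i`, evaluated
at one of them. -/
lemma fourier_inversion {m ℓ : ℕ} (v : Fin ℓ → Fin m → ZMod 2) (hinj : Function.Injective v)
    (k : Fin ℓ) (hk : v k ≠ 0) :
    ∑ y : Fin m → ZMod 2, sgn2 (∑ j, y j * v k j) *
      (2 * ((ℓ : ℤ) - ((Finset.univ.filter fun i => (∑ j, y j * v i j) = 0).card : ℤ)))
      = - 2 ^ m := by
  have hind : ∀ y : Fin m → ZMod 2,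
      2 * ((ℓ : ℤ) - ((Finset.univ.filter fun i => (∑ j, y j * v i j) = 0).card : ℤ))
        = ∑ i, (1 - sgn2 (∑ j, y j * v i j)) := by
    intro y
    have h1 : ∀ i, (1 - sgn2 (∑ j, y j * v i j))
        = 2 - 2 * (if (∑ j, y j * v i j) = 0 then (1 : ℤ) else 0) := by
      intro i
      unfold sgn2
      split_ifs <;> norm_num
    simp only [h1, Finset.sum_sub_distrib, ← Finset.mul_sum, Finset.sum_boole]
    simp
    ring
  have horth : ∀ i, ∑ y : Fin m → ZMod 2, sgn2 (∑ j, y j * v k j) * sgn2 (∑ j, y j * v i j)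
      = if i = k then 2 ^ m else 0 := by
    intro i
    have h1 : ∀ y : Fin m → ZMod 2, sgn2 (∑ j, y j * v k j) * sgn2 (∑ j, y j * v i j)
        = sgn2 (∑ j, y j * (v k + v i) j) := by
      intro y
      rw [← sgn2_add, ← Finset.sum_add_distrib]
      simp [mul_add]
    simp only [h1]
    split_ifs with hik
    · subst hik
      have h2 : v i + v i = 0 := by
        funext j
        exact CharTwo.add_self_eq_zero _
      simp only [h2, Pi.zero_apply, mul_zero, Finset.sum_const_zero]
      simp [sgn2, ZMod.card]
    · apply sum_sgn2_eq_zero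
      intro h0
      apply hik
      apply hinj
      funext j
      have := congrFun h0 j
      simp only [Pi.add_apply, Pi.zero_apply] at this
      exact (CharTwo.add_eq_zero.mp this).symm
  simp only [hind, Finset.mul_sum, mul_sub, mul_one]
  rw [Finset.sum_comm]
  simp [Finset.sum_sub_distrib, horth, sum_sgn2_eq_zero _ hk]

/-- The integers `d = gcd({2ℓ+2} ∪ {|4e_y − 4ℓ|})` and `c = gcd({2ℓ} ∪ {|4e_y − 4ℓ|})` are
powers of `2`; in particular `gcd{ℓ − e_y}` is a power of `2`.  (Since `e_y ≤ ℓ`, the natural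
number `4ℓ - 4 e_y` equals `|4 e_y − 4ℓ|`.) -/
theorem gcds_are_powers_of_two
    {G : Type*} [Group G] [Fintype G] [DecidableEq G]
    (n ℓ : ℕ) (hn : 1 ≤ n) (hG : IsExtraspecial 2 n G)
    (z : G) (hz : z ∈ Subgroup.center G) (hz2 : z ^ 2 = 1) (hz1 : z ≠ 1)
    (S : Finset G) (hS : IsNormalConnecting S)
    (hgen : Subgroup.closure (S : Set G) = ⊤)
    (hSne : S ≠ Finset.univ.erase 1)
    (φ : G → (Fin (2 * n) → ZMod 2))
    (hadd : ∀ a b : G, φ (a * b) = φ a + φ b)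
    (hsurj : Function.Surjective φ)
    (hker : ∀ a : G, φ a = 0 ↔ a ∈ Subgroup.center G)
    (x : Fin ℓ → G)
    (hx2 : ∀ i, Nat.card {h : G | IsConj (x i) h} = 2)
    (hxd : ∀ i j, i ≠ j → ¬ IsConj (x i) (x j))
    (hdec : (S : Set G) \ {z} = ⋃ i, {h : G | IsConj (x i) h}) :
    (∃ a : ℕ, Nat.gcd (2 * ℓ + 2)
        (Finset.univ.gcd fun y : Fin (2 * n) → ZMod 2 => 4 * ℓ - 4 * eY φ x y) = 2 ^ a) ∧
    (∃ b : ℕ, Nat.gcd (2 * ℓ)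
        (Finset.univ.gcd fun y : Fin (2 * n) → ZMod 2 => 4 * ℓ - 4 * eY φ x y) = 2 ^ b) ∧
    (∃ c : ℕ, (Finset.univ.gcd fun y : Fin (2 * n) → ZMod 2 => ℓ - eY φ x y) = 2 ^ c) := by
  obtain ⟨hcard, hZ, -, hcomm⟩ := hG
  have hconj1 : ∀ i, ∃ h, IsConj (x i) h ∧ h ≠ x i := by
    intro i
    by_contra! hcon
    have h1 : {h : G | IsConj (x i) h} = {x i} := by
      ext h
      exact ⟨fun hh => hcon h hh, fun hh => by
        rw [Set.mem_singleton_iff] at hh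
        subst hh
        exact IsConj.refl _⟩
    have h2 := hx2 i
    rw [h1] at h2
    simp at h2
  have hne : ∀ i, φ (x i) ≠ 0 := by
    intro i h0
    obtain ⟨h, hc, hh⟩ := hconj1 i
    obtain ⟨g, rfl⟩ := isConj_iff.mp hc
    apply hh
    rw [Subgroup.mem_center_iff.mp ((hker _).mp h0) g]
    group
  -- In a center of order two, any two nontrivial elements agree.
  have hZ2 : ∀ a ∈ Subgroup.center G, ∀ b ∈ Subgroup.center G, a ≠ 1 → b ≠ 1 → a = b := by
    intro a ha b hb ha1 hb1
    have h3 := (Nat.card_eq_two_iff' (1 : Subgroup.center G)).mp hZ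
    have := h3.unique (y₁ := ⟨a, ha⟩) (y₂ := ⟨b, hb⟩)
      (fun h => ha1 (congrArg Subtype.val h)) (fun h => hb1 (congrArg Subtype.val h))
    exact congrArg Subtype.val this
  have hinj : Function.Injective fun i => φ (x i) := by
    intro i j hij
    by_contra hne'
    apply hxd i j hne'
    have hcen : x j * (x i)⁻¹ ∈ Subgroup.center G := by
      rw [← hker]
      have h1 := hadd (x j * (x i)⁻¹) (x i)
      simp only at hij
      rw [inv_mul_cancel_right, hij] at h1
      exact left_eq_add.mp (h1.trans (add_comm _ _))
    by_cases h1 : x j * (x i)⁻¹ = 1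
    · rw [mul_inv_eq_one.mp h1]
    · obtain ⟨h, hc, hh⟩ := hconj1 i
      obtain ⟨g, rfl⟩ := isConj_iff.mp hc
      have h2 := hZ2 _ hcen _ (hcomm g (x i)) h1 (fun h => hh (mul_inv_eq_one.mp h))
      rw [mul_right_cancel h2]
      exact hc
  have hpos : 0 < ℓ := by
    rcases Nat.eq_zero_or_pos ℓ with h0 | h0
    · exfalso
      subst h0
      have h1 : (S : Set G) ⊆ Subgroup.center G := by
        intro s hs
        by_contra hsc
        have h2 : s ∈ (S : Set G) \ {z} :=
          ⟨hs, fun h => hsc (by rw [Set.mem_singleton_iff.mp h]; exact hz)⟩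
        rw [hdec] at h2
        simp at h2
      have h2 : Subgroup.center G = ⊤ := by
        rw [eq_top_iff, ← hgen]
        exact (Subgroup.closure_le _).mpr h1
      rw [h2, Subgroup.card_top, hcard] at hZ
      have h3 : 2 ^ 3 ≤ 2 ^ (2 * n + 1) := Nat.pow_le_pow_right (by norm_num) (by omega)
      omega
    · exact h0
  have hle : ∀ y, eY φ x y ≤ ℓ := fun y =>
    (Finset.card_le_univ _).trans_eq (Fintype.card_fin ℓ)
  have hdvd : (Finset.univ.gcd fun y : Fin (2 * n) → ZMod 2 => ℓ - eY φ x y) ∣ 2 ^ (2 * n) := by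
    have key := fourier_inversion (fun i => φ (x i)) hinj ⟨0, hpos⟩ (hne _)
    rw [← Int.natCast_dvd_natCast]
    push_cast
    rw [← Int.dvd_neg, ← key]
    apply Finset.dvd_sum
    intro y _
    apply Dvd.dvd.mul_left
    apply Dvd.dvd.mul_left
    have h1 := Int.natCast_dvd_natCast.mpr
      (Finset.gcd_dvd (f := fun y : Fin (2 * n) → ZMod 2 => ℓ - eY φ x y) (Finset.mem_univ y))
    rw [Nat.cast_sub (hle y)] at h1
    exact h1
  have hdvd4 : (Finset.univ.gcd fun y : Fin (2 * n) → ZMod 2 => 4 * ℓ - 4 * eY φ x y)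
      ∣ 2 ^ (2 * n + 2) := by
    simp only [← Nat.mul_sub]
    rw [Finset.gcd_mul_left, pow_add, mul_comm]
    exact mul_dvd_mul hdvd (by simp)
  have hpow : ∀ {a k : ℕ}, a ∣ 2 ^ k → ∃ b, a = 2 ^ b := fun h =>
    let ⟨b, _, hb⟩ := (Nat.dvd_prime_pow Nat.prime_two).mp h
    ⟨b, hb⟩
  exact ⟨hpow ((Nat.gcd_dvd_right _ _).trans hdvd4), hpow ((Nat.gcd_dvd_right _ _).trans hdvd4),
    hpow hdvd⟩
end
end

section
/- Let G be an extraspecial 2-group with unique central involution z, and let S ⊆ G∖{1} be a normal connecting set generating G with z ∉ S. Then for every g ∈ G, the distance between the vertices g and gz in the connected graph Cay(G,S) is exactly 2. -/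
/-!
Since `n ≥ 1`, the group is larger than its center, so the generating set `S` contains a
noncentral `s`. Some conjugate of `s` differs from `s`, and it differs by a nontrivial central
element, which can only be `z`; hence `z * s ∈ S` because `S` is normal. The path
`g, s⁻¹ * g, g * z` then has length `2`, while `z ≠ 1` and `z ∉ S` exclude distances `0` and `1`.
-/

noncomputable section

/-- The Cayley graph `Cay(G,S)` as a simple graph: `g` is adjacent to `h` iff `g * h⁻¹ ∈ S`
(for `S` symmetric with `1 ∉ S` this is the usual Cayley graph). -/
def cayGraph {G : Type*} [Group G] (S : Finset G) : SimpleGraph G :=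
  SimpleGraph.fromRel fun g h => g * h⁻¹ ∈ S

/-- A generating conjugation-closed set in an extraspecial `2`-group contains some `s` together
with its translate `z * s` by the central involution. -/
theorem exists_mem_and_central_mul_mem {G : Type*} [Group G]
    (n : ℕ) (hn : 1 ≤ n) (hG : IsExtraspecial 2 n G)
    (z : G) (hz : z ∈ Subgroup.center G) (hz1 : z ≠ 1)
    (S : Finset G) (hconj : ∀ s ∈ S, ∀ g : G, g * s * g⁻¹ ∈ S)
    (hgen : Subgroup.closure (S : Set G) = ⊤) :
    ∃ s ∈ S, z * s ∈ S := by
  obtain ⟨hcard, hcen, -, hcomm⟩ := hG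
  have hs : ∃ s ∈ S, s ∉ Subgroup.center G := by
    by_contra! h
    have htop : Subgroup.center G = ⊤ := by
      rw [eq_top_iff, ← hgen, Subgroup.closure_le]
      exact fun s hs => h s hs
    rw [htop, Subgroup.card_top, hcard] at hcen
    have h3 : 2 ^ 1 < 2 ^ (2 * n + 1) := Nat.pow_lt_pow_right (by norm_num) (by omega)
    omega
  obtain ⟨s, hsS, hsc⟩ := hs
  obtain ⟨h, hne⟩ : ∃ h : G, h * s ≠ s * h := by
    simpa [Subgroup.mem_center_iff] using hsc
  have hc1 : h * s * h⁻¹ * s⁻¹ ≠ 1 := fun e => hne <| by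
    rwa [mul_inv_eq_one, mul_inv_eq_iff_eq_mul] at e
  have hcz : h * s * h⁻¹ * s⁻¹ = z := by
    obtain ⟨y, -, hy⟩ := (Nat.card_eq_two_iff' (1 : Subgroup.center G)).1 hcen
    have h1 := hy ⟨_, hcomm h s⟩ (fun e => hc1 (congrArg Subtype.val e))
    have h2 := hy ⟨z, hz⟩ (fun e => hz1 (congrArg Subtype.val e))
    exact congrArg Subtype.val (h1.trans h2.symm)
  refine ⟨s, hsS, ?_⟩
  rw [← hcz, inv_mul_cancel_right]
  exact hconj s hsS h

/-- For `S` without `1` and closed under inversion, the relation defining `cayGraph S` is already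
irreflexive and symmetric. -/
theorem cayGraph_adj_iff {G : Type*} [Group G] (S : Finset G) (h1 : (1 : G) ∉ S)
    (hinv : ∀ s ∈ S, s⁻¹ ∈ S) (g h : G) : (cayGraph S).Adj g h ↔ g * h⁻¹ ∈ S := by
  rw [cayGraph, SimpleGraph.fromRel_adj]
  constructor
  · rintro ⟨-, h | h⟩
    · exact h
    · simpa using hinv _ h
  · intro hm
    refine ⟨?_, Or.inl hm⟩
    rintro rfl
    exact h1 (by simpa using hm)

/-- If `G` is an extraspecial `2`-group with unique central involution `z` and `S` is a normal
connecting set generating `G` with `z ∉ S`, then in `Cay(G,S)` the distance between `g` and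
`gz` is exactly `2`, for every `g`. -/
theorem dist_center_involution_eq_two
    {G : Type*} [Group G] [Fintype G] [DecidableEq G]
    (n : ℕ) (hn : 1 ≤ n) (hG : IsExtraspecial 2 n G)
    (z : G) (hz : z ∈ Subgroup.center G) (hz2 : z ^ 2 = 1) (hz1 : z ≠ 1)
    (S : Finset G) (hS : IsNormalConnecting S)
    (hgen : Subgroup.closure (S : Set G) = ⊤)
    (hzS : z ∉ S) (g : G) :
    (cayGraph S).dist g (g * z) = 2 := by
  obtain ⟨h1, hinv, hconj⟩ := hS
  obtain ⟨s, hs, hzs⟩ := exists_mem_and_central_mul_mem n hn hG z hz hz1 S hconj hgen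
  have hcomm : ∀ x : G, x * z = z * x := Subgroup.mem_center_iff.1 hz
  have hzinv : z⁻¹ = z := inv_eq_of_mul_eq_one_left (by rw [← pow_two, hz2])
  have hadj := cayGraph_adj_iff S h1 hinv
  have ha : (cayGraph S).Adj g (s⁻¹ * g) := by
    rw [hadj]; simpa using hs
  have hb : (cayGraph S).Adj (s⁻¹ * g) (g * z) := by
    rw [hadj]
    have e : s⁻¹ * g * (g * z)⁻¹ = (z * s)⁻¹ := by
      rw [hcomm g]; group
    rw [e]
    exact hinv _ hzs
  let w : (cayGraph S).Walk g (g * z) := .cons ha (.cons hb .nil)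
  have hle : (cayGraph S).dist g (g * z) ≤ 2 := SimpleGraph.dist_le w
  have h0 : (cayGraph S).dist g (g * z) ≠ 0 := fun e =>
    hz1 (by simpa using w.reachable.dist_eq_zero_iff.1 e)
  have hne1 : (cayGraph S).dist g (g * z) ≠ 1 := by
    rw [Ne, SimpleGraph.dist_eq_one_iff_adj, hadj, hcomm g, mul_inv_rev, mul_inv_cancel_left, hzinv]
    exact hzS
  omega
end
end
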